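/- The expected number of (App)-redexes in a uniformly random λυ-term of size n satisfies E(X_n)/n → 1/32, where an (App)-redex is a subterm of the form (a b)[s]. -/

import Mathlib

open Finset Filter

mutual
inductive Tm : Type
  | idx : Nat → Tm
  | lam : Tm → Tm
  | app : Tm → Tm → Tm
  | clos : Tm → Subst → Tm
inductive Subst : Type
  | slash : Tm → Subst
  | lift : Subst → Subst
  | shift : Subst
end

mutual
/-- Natural size of a λυ-term: every constructor weighs 1; index n has size n+1. -/
def Tm.size : Tm → Nat
  | .idx n => n + 1
  | .lam a => Tm.size a + 1
  | .app a b => Tm.size a + Tm.size b + 1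
  | .clos a s => Tm.size a + Subst.size s + 1
/-- Natural size of an explicit substitution. -/
def Subst.size : Subst → Nat
  | .slash a => Tm.size a + 1
  | .lift s => Subst.size s + 1
  | .shift => 1
end

/-- Number of λυ-terms of size `n`. -/
noncomputable def tcount (n : ℕ) : ℕ := Nat.card {a : Tm // Tm.size a = n}

/-- Number of explicit substitutions of size `n`. -/
noncomputable def scount (n : ℕ) : ℕ := Nat.card {s : Subst // Subst.size s = n}

/-- Expected value of the statistic `f` on a uniformly random λυ-term of size `n`
(the statistic is assumed to be bounded by the size, so summing `k` up to `n` suffices). -/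
noncomputable def expectTm (f : Tm → ℕ) (n : ℕ) : ℝ :=
  (∑ k ∈ Finset.range (n + 1),
      (k : ℝ) * (Nat.card {a : Tm // Tm.size a = n ∧ f a = k} : ℝ)) / (tcount n : ℝ)

mutual
/-- Number of (app)-redexes occurring in a λυ-term. -/
def Tm.appCount : Tm → ℕ
  | .idx _ => 0
  | .lam a => Tm.appCount a
  | .app a b => Tm.appCount a + Tm.appCount b
  | .clos (.app a b) s => Tm.appCount a + Tm.appCount b + Subst.appCount s + 1
  | .clos a s => Tm.appCount a + Subst.appCount s
/-- Number of (app)-redexes occurring in a substitution. -/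
def Subst.appCount : Subst → ℕ
  | .slash a => Tm.appCount a
  | .lift s => Subst.appCount s
  | .shift => 0
end

namespace AppRedex

theorem tm_size_pos (a : Tm) : 0 < a.size := by
  cases a <;> simp [Tm.size]

theorem subst_size_pos (s : Subst) : 0 < s.size := by
  cases s <;> simp [Subst.size]

theorem finite_le (n : ℕ) : {a : Tm | a.size ≤ n}.Finite ∧ {s : Subst | s.size ≤ n}.Finite := by
  induction n with
  | zero =>
    constructor
    · convert Set.finite_empty
      ext a
      have := tm_size_pos a
      simp; omega
    · convert Set.finite_empty
      ext a
      have := subst_size_pos a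
      simp; omega
  | succ n ih =>
    obtain ⟨h1, h2⟩ := ih
    constructor
    · refine Set.Finite.subset ((((Set.finite_Iic n).image Tm.idx).union (h1.image Tm.lam)).union
        ((Set.Finite.image2 Tm.app h1 h1).union (Set.Finite.image2 Tm.clos h1 h2))) ?_
      intro a ha
      cases a with
      | idx k =>
        left; left
        exact ⟨k, by simpa [Tm.size] using ha, rfl⟩
      | lam a =>
        left; right
        exact ⟨a, by simpa [Tm.size] using ha, rfl⟩
      | app a b =>
        right; left
        simp only [Set.mem_ofPred_eq, Tm.size] at ha
        exact ⟨a, by simp; omega, b, by simp; omega, rfl⟩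
      | clos a b =>
        right; right
        simp only [Set.mem_ofPred_eq, Tm.size] at ha
        exact ⟨a, by simp; omega, b, by simp; omega, rfl⟩
    · refine Set.Finite.subset (((h1.image Subst.slash).union (h2.image Subst.lift)).union
        (Set.finite_singleton Subst.shift)) ?_
      intro a ha
      cases a with
      | slash a =>
        left; left
        exact ⟨a, by simpa [Subst.size] using ha, rfl⟩
      | lift a =>
        left; right
        exact ⟨a, by simpa [Subst.size] using ha, rfl⟩
      | shift => right; rfl

theorem finT (n : ℕ) : {a : Tm | a.size = n}.Finite :=
  (finite_le n).1.subset (fun _ h => le_of_eq h)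

theorem finS (n : ℕ) : {a : Subst | a.size = n}.Finite :=
  (finite_le n).2.subset (fun _ h => le_of_eq h)

noncomputable def TF (n : ℕ) : Finset Tm := (finT n).toFinset
noncomputable def SF (n : ℕ) : Finset Subst := (finS n).toFinset

@[simp] theorem mem_TF {n : ℕ} {a : Tm} : a ∈ TF n ↔ a.size = n := by simp [TF]
@[simp] theorem mem_SF {n : ℕ} {a : Subst} : a ∈ SF n ↔ a.size = n := by simp [SF]

theorem TF_zero : TF 0 = ∅ := by
  ext a
  have := tm_size_pos a
  simp; omega

theorem SF_zero : SF 0 = ∅ := by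
  ext a
  have := subst_size_pos a
  simp; omega

open Classical in
theorem TF_succ (n : ℕ) : TF (n + 1) =
    (({Tm.idx n} ∪ (TF n).image Tm.lam) ∪
      ((antidiagonal n).sigma (fun p => TF p.1 ×ˢ TF p.2)).image
        (fun x => Tm.app x.2.1 x.2.2)) ∪
      ((antidiagonal n).sigma (fun p => TF p.1 ×ˢ SF p.2)).image
        (fun x => Tm.clos x.2.1 x.2.2) := by
  ext a
  cases a <;> simp [Tm.size]

open Classical in
theorem SF_succ (n : ℕ) : SF (n + 1) =
    ((TF n).image Subst.slash ∪ (SF n).image Subst.lift) ∪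
      (if n = 0 then {Subst.shift} else ∅) := by
  ext a
  cases a <;> split_ifs <;> simp_all [Subst.size]

open Classical in
theorem sum_TF_succ (f : Tm → ℝ) (n : ℕ) : ∑ a ∈ TF (n + 1), f a =
    f (Tm.idx n) + ∑ a ∈ TF n, f (Tm.lam a) +
    ∑ p ∈ antidiagonal n, ∑ a ∈ TF p.1, ∑ b ∈ TF p.2, f (Tm.app a b) +
    ∑ p ∈ antidiagonal n, ∑ a ∈ TF p.1, ∑ b ∈ SF p.2, f (Tm.clos a b) := by
  rw [TF_succ, sum_union, sum_union, sum_union, sum_singleton, sum_image, sum_image, sum_image,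
    sum_sigma, sum_sigma]
  · simp only [sum_product]
  · rintro ⟨⟨i, j⟩, a, b⟩ h ⟨⟨i', j'⟩, a', b'⟩ h' e
    simp at h h' e
    obtain ⟨_, rfl, rfl⟩ := h
    obtain ⟨_, rfl, rfl⟩ := h'
    obtain ⟨rfl, rfl⟩ := e
    rfl
  · rintro ⟨⟨i, j⟩, a, b⟩ h ⟨⟨i', j'⟩, a', b'⟩ h' e
    simp at h h' e
    obtain ⟨_, rfl, rfl⟩ := h
    obtain ⟨_, rfl, rfl⟩ := h'
    obtain ⟨rfl, rfl⟩ := e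
    rfl
  · intro a _ b _ e
    simpa using e
  · rw [disjoint_left]; intro a; cases a <;> simp
  · rw [disjoint_left]; intro a; cases a <;> simp
  · rw [disjoint_left]; intro a; cases a <;> simp

open Classical in
theorem sum_SF_succ (f : Subst → ℝ) (n : ℕ) : ∑ a ∈ SF (n + 1), f a =
    ∑ a ∈ TF n, f (Subst.slash a) + ∑ a ∈ SF n, f (Subst.lift a) +
      (if n = 0 then f Subst.shift else 0) := by
  rw [SF_succ, sum_union, sum_union, sum_image, sum_image]
  · split_ifs <;> simp
  · intro a _ b _ e
    simpa using e
  · intro a _ b _ e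
    simpa using e
  · rw [disjoint_left]; intro a; cases a <;> simp
  · rw [disjoint_left]; intro a; cases a <;> split_ifs <;> simp

def isApp : Tm → ℕ
  | .app _ _ => 1
  | _ => 0

theorem appCount_clos (a : Tm) (s : Subst) :
    (Tm.clos a s).appCount = a.appCount + s.appCount + isApp a := by
  cases a <;> simp [Tm.appCount, isApp]

mutual
theorem appCount_le : (a : Tm) → a.appCount ≤ a.size
  | .idx _ => by simp [Tm.appCount]
  | .lam a => by
    have := appCount_le a
    simp only [Tm.appCount, Tm.size]; omega
  | .app a b => by
    have := appCount_le a
    have := appCount_le b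
    simp only [Tm.appCount, Tm.size]; omega
  | .clos a s => by
    have := appCount_le a
    have := appCount_le_s s
    have : isApp a ≤ 1 := by cases a <;> simp [isApp]
    rw [appCount_clos]
    simp only [Tm.size]; omega
theorem appCount_le_s : (a : Subst) → a.appCount ≤ a.size
  | .slash a => by
    have := appCount_le a
    simp only [Subst.appCount, Subst.size]; omega
  | .lift a => by
    have := appCount_le_s a
    simp only [Subst.appCount, Subst.size]; omega
  | .shift => by simp [Subst.appCount]
end

/-- generating series of a statistic on terms -/
noncomputable def gT (f : Tm → ℝ) : PowerSeries ℝ := PowerSeries.mk fun n => ∑ a ∈ TF n, f a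
/-- generating series of a statistic on substitutions -/
noncomputable def gS (f : Subst → ℝ) : PowerSeries ℝ := PowerSeries.mk fun n => ∑ a ∈ SF n, f a

noncomputable def pT : PowerSeries ℝ := gT fun _ => 1
noncomputable def pS : PowerSeries ℝ := gS fun _ => 1
noncomputable def pA : PowerSeries ℝ := gT fun a => a.appCount
noncomputable def pB : PowerSeries ℝ := gS fun a => a.appCount
noncomputable def pE : PowerSeries ℝ := gT fun a => isApp a
noncomputable def pO : PowerSeries ℝ := PowerSeries.mk fun _ => 1

open PowerSeries

theorem gT_ext (f : Tm → ℝ) (G : PowerSeries ℝ)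
    (h : ∀ n, ∑ a ∈ TF (n + 1), f a = coeff n G) : gT f = X * G := by
  ext n
  cases n with
  | zero => simp [gT, TF_zero]
  | succ n => simp [gT, coeff_succ_X_mul, h]

theorem gS_ext (f : Subst → ℝ) (G : PowerSeries ℝ)
    (h : ∀ n, ∑ a ∈ SF (n + 1), f a = coeff n G) : gS f = X * G := by
  ext n
  cases n with
  | zero => simp [gS, SF_zero]
  | succ n => simp [gS, coeff_succ_X_mul, h]

theorem gT_mul_gT (f g : Tm → ℝ) (n : ℕ) : coeff n (gT f * gT g) =
    ∑ p ∈ antidiagonal n, ∑ a ∈ TF p.1, ∑ b ∈ TF p.2, f a * g b := by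
  simp [coeff_mul, gT, sum_mul_sum]

theorem gT_mul_gS (f : Tm → ℝ) (g : Subst → ℝ) (n : ℕ) : coeff n (gT f * gS g) =
    ∑ p ∈ antidiagonal n, ∑ a ∈ TF p.1, ∑ b ∈ SF p.2, f a * g b := by
  simp [coeff_mul, gT, gS, sum_mul_sum]

theorem pO_eq : pO * (1 - X) = 1 := by
  rw [mul_comm]
  exact PowerSeries.mk_one_mul_one_sub_eq_one ℝ |> fun h => by rw [mul_comm]; exact h

theorem pT_eq : pT = X * (pO + pT + pT * pT + pT * pS) := by
  apply gT_ext
  intro n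
  rw [sum_TF_succ]
  simp only [map_add, pT, pS, gT_mul_gT, gT_mul_gS, mul_one]
  simp [pO, gT]

theorem pS_eq : pS = X * (pT + pS + 1) := by
  apply gS_ext
  intro n
  rw [sum_SF_succ]
  simp only [map_add, pT, pS, coeff_one]
  simp [gT, gS]

theorem pE_eq : pE = X * (pT * pT) := by
  apply gT_ext
  intro n
  rw [sum_TF_succ]
  simp only [pT, gT_mul_gT, mul_one]
  simp [isApp]

theorem pB_eq : pB = X * (pA + pB) := by
  apply gS_ext
  intro n
  rw [sum_SF_succ]
  simp only [map_add, pA, pB]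
  simp [gT, gS, Subst.appCount]

theorem pA_eq : pA = X * (pA + (pA * pT + pT * pA) + (pA * pS + pT * pB + pE * pS)) := by
  apply gT_ext
  intro n
  rw [sum_TF_succ]
  simp only [map_add, pA, pB, pT, pS, pE, gT_mul_gT, gT_mul_gS, appCount_clos]
  simp only [← sum_add_distrib]
  simp [gT, Tm.appCount]

noncomputable def pC : PowerSeries ℝ := PowerSeries.mk fun n => (catalan n : ℝ)

theorem pC_eq : pC = 1 + X * pC ^ 2 := by
  ext n
  cases n with
  | zero => simp [pC]
  | succ n =>
    rw [map_add, coeff_succ_X_mul]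
    simp [pC, coeff_one, sq, coeff_mul, catalan_succ']

theorem pT_quad : pT = X * (1 + pT) ^ 2 := by
  linear_combination (1 - X) * pT_eq + X * pO_eq + X * pT * pS_eq

theorem one_add_pT : 1 + pT = pC := by
  have h : (1 - X * (1 + pT + pC) : PowerSeries ℝ) ≠ 0 := by
    intro h
    have := congrArg (coeff 0) h
    simp at this
  rw [← sub_eq_zero]
  apply mul_left_cancel₀ h
  linear_combination pT_quad - pC_eq

theorem pA_mul : pA * (1 - 2 * X * pC) = X ^ 5 * pC ^ 5 := by
  have h : (1 - X : PowerSeries ℝ) ≠ 0 := by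
    intro h
    have := congrArg (coeff 0) h
    simp at this
  have hT : pT = X * pC ^ 2 := by rw [← one_add_pT]; exact pT_quad
  have hS : (1 - X) * pS = X * pC := by rw [← one_add_pT]; linear_combination pS_eq
  have hB : (1 - X) * pB = X * pA := by linear_combination pB_eq
  have h1 : pA * ((1 - X) ^ 2 - 2 * X * pT * (1 - X) - X * (X * pC) - X * X * pT)
      = X * pE * (X * pC) := by
    linear_combination (1 - X) * pA_eq + X * (pA + pE) * hS + X * pT * hB
  have h2 : pA * (1 - 2 * X * pC) = X * pE * (X * pC) := by
    rw [← h1, ← one_add_pT]; ring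
  rw [h2, pE_eq, hT]; ring

noncomputable def G (k : ℕ) : PowerSeries ℝ := PowerSeries.mk fun n => ((2 * n + k).choose n : ℝ)

theorem G_rec (k : ℕ) : X * G (k + 2) = G (k + 1) - G k := by
  ext n
  cases n with
  | zero => simp [G]
  | succ n =>
    rw [coeff_succ_X_mul]
    simp only [G, coeff_mk, map_sub]
    have : (2 * (n + 1) + (k + 1)).choose (n + 1) =
        (2 * n + (k + 2)).choose n + (2 * (n + 1) + k).choose (n + 1) := by
      rw [show 2 * (n + 1) + (k + 1) = (2 * n + (k + 2)) + 1 by ring, Nat.choose_succ_succ]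
      congr 2
      ring
    rw [this]; push_cast; ring

theorem G_zero : G 0 = 1 + 2 * X * G 1 := by
  ext n
  cases n with
  | zero => simp [G]
  | succ n =>
    have e : (2 : PowerSeries ℝ) * X * G 1 = X * (G 1 + G 1) := by ring
    rw [e, map_add, coeff_succ_X_mul]
    simp only [G, coeff_mk, map_add, coeff_one]
    have : (2 * (n + 1) + 0).choose (n + 1) = (2 * n + 1).choose n + (2 * n + 1).choose n := by
      rw [show 2 * (n + 1) + 0 = (2 * n + 1) + 1 by ring, Nat.choose_succ_succ]
      congr 1
      exact (Nat.choose_symm_half n)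
    rw [this]; push_cast; simp

theorem G_zero_mul : G 0 * (1 - 2 * X * pC) = 1 := by
  have hd : d⁄dX ℝ (X * pC) = G 0 := by
    ext n
    rw [coeff_derivative, coeff_succ_X_mul]
    simp only [G, pC, coeff_mk, add_zero]
    rw [← Nat.centralBinom_eq_two_mul_choose, ← succ_mul_catalan_eq_centralBinom]
    push_cast; ring
  have hU : X * pC = X + (X * pC) * (X * pC) := by
    linear_combination X * pC_eq
  have := congrArg (d⁄dX ℝ) hU
  rw [map_add, Derivation.leibniz _ (X * pC) (X * pC), hd, derivative_X] at this
  simp only [smul_eq_mul] at this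
  linear_combination this

theorem G_one : G 1 = pC * G 0 := by
  have h : (2 * X : PowerSeries ℝ) ≠ 0 := by
    intro h
    have := congrArg (coeff 1) h
    rw [two_mul, map_add] at this
    simp at this
  apply mul_left_cancel₀ h
  linear_combination -G_zero + G_zero_mul

theorem G_eq (k : ℕ) : G k = pC ^ k * G 0 ∧ G (k + 1) = pC ^ (k + 1) * G 0 := by
  induction k with
  | zero => simp [G_one]
  | succ k ih =>
    refine ⟨ih.2, ?_⟩
    apply mul_left_cancel₀ (X_ne_zero (R := ℝ))
    rw [G_rec, ih.1, ih.2]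
    linear_combination pC ^ k * G 0 * pC_eq

theorem pA_G : pA = X ^ 5 * G 5 := by
  rw [(G_eq 5).1]
  linear_combination G 0 * pA_mul - pA * G_zero_mul

theorem sum_appCount (m : ℕ) :
    ∑ a ∈ TF (m + 5), (a.appCount : ℝ) = ((2 * m + 5).choose m : ℝ) := by
  have := congrArg (coeff (m + 5)) pA_G
  rw [coeff_X_pow_mul] at this
  simpa [pA, gT, G] using this

theorem tcount_eq (m : ℕ) : (tcount (m + 1) : ℝ) = catalan (m + 1) := by
  have := congrArg (coeff (m + 1)) one_add_pT
  simp [pC, pT, gT, coeff_one] at this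
  rw [← this]
  congr 1
  exact Nat.subtype_card _ (fun x => mem_TF)

theorem expect_eq (n : ℕ) : expectTm Tm.appCount n =
    (∑ a ∈ TF n, (a.appCount : ℝ)) / tcount n := by
  unfold expectTm
  congr 1
  rw [← sum_fiberwise_of_maps_to (s := TF n) (t := range (n + 1)) (g := Tm.appCount)]
  · apply sum_congr rfl
    intro k _
    rw [Nat.subtype_card ((TF n).filter (fun a => a.appCount = k)) (by simp)]
    rw [sum_congr rfl (g := fun _ => (k : ℝ))]
    · simp [mul_comm]
    · intro a ha
      rw [(mem_filter.1 ha).2]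
  · intro a ha
    have := appCount_le a
    rw [mem_TF] at ha
    simp; omega

theorem ratio (m : ℕ) : ((2 * m + 5).choose m : ℝ) * (8 * (2 * m + 7) * (2 * m + 9)) =
    catalan (m + 5) * ((m + 1) * (m + 2) * (m + 6)) := by
  have h1 : ((m + 5 : ℕ) + 1 : ℝ) * catalan (m + 5) = ((2 * (m + 5)).choose (m + 5) : ℝ) := by
    rw [← Nat.centralBinom_eq_two_mul_choose]
    exact_mod_cast succ_mul_catalan_eq_centralBinom (m + 5)
  have h2 : (catalan (m + 5) : ℝ) = ((2 * (m + 5)).choose (m + 5) : ℝ) / ((m + 5 : ℕ) + 1 : ℝ) := by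
    rw [← h1]; field_simp
  rw [h2, Nat.cast_choose ℝ (show m ≤ 2 * m + 5 by omega),
    Nat.cast_choose ℝ (show m + 5 ≤ 2 * (m + 5) by omega)]
  rw [show 2 * m + 5 - m = m + 5 by omega, show 2 * (m + 5) - (m + 5) = m + 5 by omega,
    show 2 * (m + 5) = (2 * m + 5) + 5 by ring]
  have hm : (m.factorial : ℝ) ≠ 0 := by positivity
  have hm2 : ((2 * m + 5).factorial : ℝ) ≠ 0 := by positivity
  simp only [Nat.factorial_succ (2 * m + 5), Nat.factorial_succ (2 * m + 5 + 1),
    Nat.factorial_succ (2 * m + 5 + 2), Nat.factorial_succ (2 * m + 5 + 3),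
    Nat.factorial_succ (2 * m + 5 + 4), Nat.factorial_succ m, Nat.factorial_succ (m + 1),
    Nat.factorial_succ (m + 2), Nat.factorial_succ (m + 3), Nat.factorial_succ (m + 4)]
  generalize (2 * m + 5).factorial = F at *
  generalize m.factorial = f at *
  push_cast
  field_simp
  ring

theorem value (m : ℕ) : expectTm Tm.appCount (m + 5) / ((m + 5 : ℕ) : ℝ) =
    1 / 8 * (((1 + 1 * (m : ℝ)) / (5 + 1 * m)) * ((2 + 1 * (m : ℝ)) / (7 + 2 * m)) *
      ((6 + 1 * (m : ℝ)) / (9 + 2 * m))) := by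
  rw [expect_eq, sum_appCount, tcount_eq (m + 4)]
  have hc : (catalan (m + 5) : ℝ) ≠ 0 := by
    intro h
    have := ratio m
    rw [h, zero_mul] at this
    have : 0 < ((2 * m + 5).choose m : ℝ) := by
      exact_mod_cast Nat.choose_pos (by omega)
    have : 0 < ((2 * m + 5).choose m : ℝ) * (8 * (2 * m + 7) * (2 * m + 9)) := by positivity
    linarith
  have := ratio m
  push_cast
  rw [show m + 4 + 1 = m + 5 by ring]
  field_simp
  linear_combination (m + 5 : ℝ) * this

end AppRedex

/-- the expected number of (App)-redexes (subterms (a b)[s]) per size n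
tends to 1/32. -/
theorem stmt15 :
    Tendsto (fun n : ℕ => expectTm Tm.appCount n / (n : ℝ)) atTop (nhds (1 / 32)) := by
  rw [← tendsto_add_atTop_iff_nat 5]
  simp only [AppRedex.value]
  have h1 := tendsto_add_mul_div_add_mul_atTop_nhds (𝕜 := ℝ) 1 5 1 (d := 1) one_ne_zero
  have h2 := tendsto_add_mul_div_add_mul_atTop_nhds (𝕜 := ℝ) 2 7 1 (d := 2) two_ne_zero
  have h3 := tendsto_add_mul_div_add_mul_atTop_nhds (𝕜 := ℝ) 6 9 1 (d := 2) two_ne_zero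
  have := ((h1.mul h2).mul h3).const_mul (1 / 8 : ℝ)
  convert this using 2
  norm_num
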